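/- arXiv:math/0605539 — 2 statements merged into one kernel-verified Lean document; each statement's English description precedes it below -/
import Mathlib

section
/- There is a ring isomorphism ℤ[x₁,…,xₙ,u₁,…,uₙ]/⟨e₁(x)−e₁(u), …, eₙ(x)−eₙ(u)⟩ ≅ 𝒢, where e_k denotes the k-th elementary symmetric polynomial (so the relations say (1+x₁)⋯(1+xₙ) = (1+u₁)⋯(1+uₙ)), sending the class of x_ν to the tuple (u_{w(ν)})_{w∈S_n} and the class of u_ν to the constant tuple whose every entry is u_ν. -/
open MvPolynomial

/-- The GKM set: tuples `(f_w)_{w ∈ S_n}` of polynomials in `ℤ[u₁,…,uₙ]` such that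
`u_p - u_q` divides `f_w - f_{s_{pq} w}` for all `w` and all `p < q`. -/
def gkmSet (n : ℕ) : Set (Equiv.Perm (Fin n) → MvPolynomial (Fin n) ℤ) :=
  {f | ∀ w : Equiv.Perm (Fin n), ∀ p q : Fin n, p < q →
    (X p - X q : MvPolynomial (Fin n) ℤ) ∣ (f w - f (Equiv.swap p q * w))}

/-- The ring homomorphism `ℤ[x₁,…,xₙ,u₁,…,uₙ] → ∏_{w ∈ S_n} ℤ[u₁,…,uₙ]` sending
`x_ν` to the tuple `(u_{w(ν)})_w` and `u_ν` to the constant tuple `u_ν`. -/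
noncomputable def borelHom (n : ℕ) :
    MvPolynomial (Fin n ⊕ Fin n) ℤ →+* (Equiv.Perm (Fin n) → MvPolynomial (Fin n) ℤ) :=
  eval₂Hom (Int.castRingHom _)
    (Sum.elim (fun ν => fun w => X (w ν)) (fun ν => fun _ => X ν))

/-- The ideal generated by `e_k(x) - e_k(u)` for `k = 1, …, n`; the relations say
`(1+x₁)⋯(1+xₙ) = (1+u₁)⋯(1+uₙ)`. -/
noncomputable def symmRelations (n : ℕ) : Ideal (MvPolynomial (Fin n ⊕ Fin n) ℤ) :=
  Ideal.span {r | ∃ k ∈ Finset.Icc 1 n,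
    r = rename Sum.inl (esymm (Fin n) ℤ k) - rename Sum.inr (esymm (Fin n) ℤ k)}

theorem bp_eval_inl (n : ℕ) (ν : Fin n) (w : Equiv.Perm (Fin n)) :
    borelHom n (X (Sum.inl ν)) w = X (w ν) := by
  simp [borelHom]

theorem bp_eval_inr (n : ℕ) (ν : Fin n) (w : Equiv.Perm (Fin n)) :
    borelHom n (X (Sum.inr ν)) w = X ν := by
  simp [borelHom]

/-- The `w`-component of `borelHom`. -/
noncomputable def bpEv (n : ℕ) (w : Equiv.Perm (Fin n)) :
    MvPolynomial (Fin n ⊕ Fin n) ℤ →+* MvPolynomial (Fin n) ℤ :=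
  (Pi.evalRingHom _ w).comp (borelHom n)

theorem bpEv_apply (n : ℕ) (w : Equiv.Perm (Fin n)) (P) : bpEv n w P = borelHom n P w := rfl

theorem bpEv_inl (n : ℕ) (ν : Fin n) (w : Equiv.Perm (Fin n)) :
    bpEv n w (X (Sum.inl ν)) = X (w ν) := bp_eval_inl n ν w

theorem bpEv_inr (n : ℕ) (ν : Fin n) (w : Equiv.Perm (Fin n)) :
    bpEv n w (X (Sum.inr ν)) = X ν := bp_eval_inr n ν w

theorem bpEv_rename_inr (n : ℕ) (w : Equiv.Perm (Fin n)) (P : MvPolynomial (Fin n) ℤ) :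
    bpEv n w (rename Sum.inr P) = P := by
  have : (bpEv n w).comp (rename (R := ℤ) (Sum.inr : Fin n → Fin n ⊕ Fin n)).toRingHom
      = RingHom.id _ := by
    apply MvPolynomial.ringHom_ext
    · intro r; simp
    · intro i; simp [bpEv_inr]
  exact congrArg (fun f => f P) this

theorem bpEv_rename_inl (n : ℕ) (w : Equiv.Perm (Fin n)) (P : MvPolynomial (Fin n) ℤ) :
    bpEv n w (rename Sum.inl P) = rename w P := by
  have : (bpEv n w).comp (rename (R := ℤ) (Sum.inl : Fin n → Fin n ⊕ Fin n)).toRingHom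
      = (rename (R := ℤ) w).toRingHom := by
    apply MvPolynomial.ringHom_ext
    · intro r; simp
    · intro i; simp [bpEv_inl]
  exact congrArg (fun f => f P) this

theorem bp_range_sub (n : ℕ) (P) : borelHom n P ∈ gkmSet n := by
  intro w p q hpq
  rw [← bpEv_apply, ← bpEv_apply, ← Ideal.mem_span_singleton, ← Ideal.Quotient.eq]
  have : (Ideal.Quotient.mk (Ideal.span {(X p - X q : MvPolynomial (Fin n) ℤ)})).comp (bpEv n w) =
      (Ideal.Quotient.mk (Ideal.span {(X p - X q : MvPolynomial (Fin n) ℤ)})).comp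
        (bpEv n (Equiv.swap p q * w)) := by
    have hX : Ideal.Quotient.mk (Ideal.span {(X p - X q : MvPolynomial (Fin n) ℤ)}) (X p)
        = Ideal.Quotient.mk _ (X q) := by
      rw [Ideal.Quotient.eq]; exact Ideal.mem_span_singleton_self _
    apply MvPolynomial.ringHom_ext
    · intro r; simp
    · rintro (i | i)
      · simp only [RingHom.comp_apply, bpEv_inl, Equiv.Perm.mul_apply]
        rw [Equiv.swap_apply_def]
        split_ifs with h1 h2
        · rw [h1, hX]
        · rw [h2, hX]
        · rfl
      · simp only [RingHom.comp_apply, bpEv_inr]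
  exact congrArg (fun f => f P) this

theorem bp_ker_ge (n : ℕ) : symmRelations n ≤ RingHom.ker (borelHom n) := by
  rw [symmRelations, Ideal.span_le]
  rintro _ ⟨k, hk, rfl⟩
  rw [SetLike.mem_coe, RingHom.mem_ker]
  funext w
  rw [← bpEv_apply, map_sub, bpEv_rename_inl, bpEv_rename_inr, rename_esymm, sub_self]
  rfl

theorem bp_irred {n : ℕ} {a p : Fin n} (h : p ≠ a) :
    Irreducible (X a - X p : MvPolynomial (Fin n) ℤ) := by
  have := irreducible_mul_X_add (1 : MvPolynomial (Fin n) ℤ) (-X p) a one_ne_zero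
    (by simp) (by simp [vars_neg, vars_X, h.symm]) isRelPrime_one_left
  simpa [sub_eq_add_neg] using this

theorem bp_relprime {n : ℕ} {a p b q : Fin n} (h : p < a) (h' : q < b)
    (hne : ¬ (a = b ∧ p = q)) :
    IsRelPrime (X a - X p : MvPolynomial (Fin n) ℤ) (X b - X q) := by
  rw [(bp_irred h.ne).isRelPrime_iff_not_dvd]
  intro hd
  have h2 := map_dvd (rename (R := ℤ) (fun i => if i = a then p else i)) hd
  simp only [map_sub, rename_X, if_true, h.ne, if_false, sub_self, zero_dvd_iff,
    sub_eq_zero] at h2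
  have h3 := X_injective h2
  split_ifs at h3 with h4 h5 h5 <;> grind

/-- Triangular family of (double-Schubert-like) products. -/
noncomputable def bpD (n : ℕ) (w : Equiv.Perm (Fin n)) : MvPolynomial (Fin n ⊕ Fin n) ℤ :=
  ∏ x ∈ Finset.univ.filter (fun x : Fin n × Fin n => x.2 < w x.1 ∧ ∀ j < x.1, w j ≠ x.2),
    (X (Sum.inl x.1) - X (Sum.inr x.2))

theorem bpEv_D (n : ℕ) (w v : Equiv.Perm (Fin n)) : bpEv n v (bpD n w) =
  ∏ x ∈ Finset.univ.filter (fun x : Fin n × Fin n => x.2 < w x.1 ∧ ∀ j < x.1, w j ≠ x.2),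
    (X (v x.1) - X x.2) := by
  simp [bpD, map_prod, bpEv_inl, bpEv_inr]

/-- The lexicographic key of a permutation. -/
def bpKey {n : ℕ} (w : Equiv.Perm (Fin n)) : Lex (Fin n → Fin n) := toLex (fun i => w i)

theorem bpKey_inj {n : ℕ} : Function.Injective (bpKey (n := n)) := by
  intro a b h
  ext i
  have := congrFun (toLex.injective h) i
  rw [this]

theorem bpKey_lt {n : ℕ} (v w : Equiv.Perm (Fin n)) :
    bpKey v < bpKey w ↔ ∃ i, (∀ j < i, v j = w j) ∧ v i < w i := Iff.rfl

theorem bpEv_D_zero {n : ℕ} {v w : Equiv.Perm (Fin n)} (h : bpKey v < bpKey w) :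
    bpEv n v (bpD n w) = 0 := by
  obtain ⟨i, h1, h2⟩ := (bpKey_lt v w).1 h
  rw [bpEv_D]
  apply Finset.prod_eq_zero (i := (i, v i))
  · simp only [Finset.mem_filter, Finset.mem_univ, true_and]
    refine ⟨h2, fun j hj he => ?_⟩
    rw [← h1 j hj] at he
    exact hj.ne (v.injective he)
  · simp

theorem bpEv_D_ne {n : ℕ} (w : Equiv.Perm (Fin n)) : bpEv n w (bpD n w) ≠ 0 := by
  rw [bpEv_D, Finset.prod_ne_zero_iff]
  intro x hx
  simp only [Finset.mem_filter, Finset.mem_univ, true_and] at hx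
  exact (bp_irred hx.1.ne).ne_zero

theorem bp_dvd {n : ℕ} {f : Equiv.Perm (Fin n) → MvPolynomial (Fin n) ℤ} (hf : f ∈ gkmSet n)
    (w : Equiv.Perm (Fin n)) (h0 : ∀ v, bpKey v < bpKey w → f v = 0) :
    bpEv n w (bpD n w) ∣ f w := by
  rw [bpEv_D]
  apply Finset.prod_dvd_of_isRelPrime
  · rintro ⟨i, p⟩ hx ⟨j, q⟩ hy hne
    simp only [Finset.coe_filter, Finset.mem_univ, true_and, Set.mem_ofPred_eq] at hx hy
    apply bp_relprime hx.1 hy.1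
    rintro ⟨ha, hb⟩
    exact hne (Prod.ext (w.injective ha) hb)
  · rintro ⟨i, p⟩ hx
    simp only [Finset.mem_filter, Finset.mem_univ, true_and] at hx
    have h1 := hf w p (w i) hx.1
    rw [h0 (Equiv.swap p (w i) * w), sub_zero] at h1
    · rw [← neg_sub]; exact (neg_dvd).2 h1
    · refine (bpKey_lt _ _).2 ⟨i, fun j hj => ?_, ?_⟩
      · rw [Equiv.Perm.mul_apply, Equiv.swap_apply_of_ne_of_ne (hx.2 j hj)]
        exact fun h => hj.ne (w.injective h)
      · simpa using hx.1

theorem gkm_sub {n : ℕ} {f g : Equiv.Perm (Fin n) → MvPolynomial (Fin n) ℤ} (hf : f ∈ gkmSet n)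
    (hg : g ∈ gkmSet n) : f - g ∈ gkmSet n := by
  intro w p q h
  have := dvd_sub (hf w p q h) (hg w p q h)
  convert this using 1
  simp only [Pi.sub_apply]; ring

open Classical in
theorem bp_surj_aux {n : ℕ} (k : ℕ) : ∀ f ∈ gkmSet n,
    (Finset.univ.filter (fun w : Equiv.Perm (Fin n) =>
      ∃ v, bpKey v ≤ bpKey w ∧ f v ≠ 0)).card ≤ k → f ∈ Set.range (borelHom n) := by
  induction k with
  | zero =>
    intro f hf hk
    have : f = 0 := by
      funext w
      by_contra h
      have hw : w ∈ (Finset.univ.filter (fun w : Equiv.Perm (Fin n) =>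
        ∃ v, bpKey v ≤ bpKey w ∧ f v ≠ 0)) := by
          simp only [Finset.mem_filter, Finset.mem_univ, true_and]
          exact ⟨w, le_rfl, h⟩
      rw [Finset.card_eq_zero.1 (Nat.le_zero.1 hk)] at hw
      simp at hw
    exact ⟨0, by rw [map_zero, this]⟩
  | succ k ih =>
    intro f hf hk
    by_cases hz : ∃ w, f w ≠ 0
    · obtain ⟨w, hw, hmin⟩ := Finset.exists_min_image
        (Finset.univ.filter (fun w : Equiv.Perm (Fin n) => f w ≠ 0)) bpKey
        (by obtain ⟨w, hw⟩ := hz; exact ⟨w, by simpa using hw⟩)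
      simp only [Finset.mem_filter, Finset.mem_univ, true_and] at hw hmin
      have h0 : ∀ v, bpKey v < bpKey w → f v = 0 := by
        intro v hv
        by_contra h
        exact absurd (hmin v h) (not_le.2 hv)
      obtain ⟨c, hc⟩ := bp_dvd hf w h0
      set g := f - borelHom n (bpD n w * rename Sum.inr c) with hg
      have hg0 : ∀ v, bpKey v ≤ bpKey w → g v = 0 := by
        intro v hv
        have e : g v = f v - bpEv n v (bpD n w) * c := by
          rw [hg, Pi.sub_apply, ← bpEv_apply, map_mul, bpEv_rename_inr]
        rw [e]
        rcases hv.lt_or_eq with h | h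
        · rw [h0 v h, bpEv_D_zero h]; simp
        · rw [bpKey_inj h, hc, sub_self]
      obtain ⟨P, hP⟩ := ih g (gkm_sub hf (bp_range_sub n _)) (by
        apply Nat.le_of_lt_succ
        refine lt_of_lt_of_le (Finset.card_lt_card ?_) hk
        rw [Finset.ssubset_iff_of_subset]
        · refine ⟨w, ?_, ?_⟩
          · simp only [Finset.mem_filter, Finset.mem_univ, true_and]
            exact ⟨w, le_rfl, hw⟩
          · simp only [Finset.mem_filter, Finset.mem_univ, true_and]
            rintro ⟨v, hv, hv'⟩
            exact hv' (hg0 v hv)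
        · intro v hv
          simp only [Finset.mem_filter, Finset.mem_univ, true_and] at hv ⊢
          obtain ⟨v', h1, h2⟩ := hv
          refine ⟨w, ?_, hw⟩
          by_contra h
          exact h2 (hg0 v' (h1.trans (not_le.1 h).le)))
      exact ⟨P + bpD n w * rename Sum.inr c, by rw [map_add, hP, hg]; simp⟩
    · push Not at hz
      exact ⟨0, by rw [map_zero]; funext w; exact (hz w).symm⟩

theorem bp_range (n : ℕ) : Set.range (borelHom n) = gkmSet n := by
  apply Set.Subset.antisymm
  · rintro _ ⟨P, rfl⟩; exact bp_range_sub n P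
  · intro f hf; exact bp_surj_aux _ f hf le_rfl

section Span
open Polynomial in
theorem bp_span (n : ℕ) : ∀ (R A : Type) [CommRing R] [CommRing A] [Algebra R A]
    (x : Fin n → A) (q : R[X]), q.Monic → q.natDegree = n →
    q.map (algebraMap R A) = ∏ i, (Polynomial.X - Polynomial.C (x i)) →
    Algebra.adjoin R (Set.range x) = ⊤ →
    ∃ s : Finset A, s.card ≤ n.factorial ∧ Submodule.span R (s : Set A) = ⊤ := by
  classical
  induction n with
  | zero =>
    intro R A _ _ _ x q _ _ _ ha
    refine ⟨{1}, by simp, ?_⟩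
    rw [Set.range_eq_empty, Algebra.adjoin_empty] at ha
    rw [Finset.coe_singleton, ← Submodule.one_eq_span, ← Algebra.toSubmodule_bot, ha]
    rfl
  | succ n ih =>
    intro R A _ _ _ x q hq hdeg hmap ha
    rcases subsingleton_or_nontrivial A with hA | hA
    · refine ⟨∅, by simp, ?_⟩
      exact Subsingleton.elim _ _
    have hR : Nontrivial R := (algebraMap R A).domain_nontrivial
    let B := Algebra.adjoin R {x 0}
    let y : B := ⟨x 0, Algebra.self_mem_adjoin_singleton R (x 0)⟩
    let q' : B[X] := (q.map (algebraMap R B)) /ₘ (Polynomial.X - Polynomial.C y)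
    have hqB : (q.map (algebraMap R B)).Monic := hq.map _
    have hqBd : (q.map (algebraMap R B)).natDegree = n + 1 := by
      rw [hq.natDegree_map, hdeg]
    have hroot : aeval (x 0) q = 0 := by
      rw [Polynomial.aeval_def, ← Polynomial.eval_map, hmap, Polynomial.eval_prod]
      apply Finset.prod_eq_zero (Finset.mem_univ 0)
      simp
    obtain ⟨t, htc, hts⟩ := ih B A (fun i => x i.succ) q'
      (by
        rw [Monic, leadingCoeff_divByMonic_of_monic (monic_X_sub_C y)]
        · exact hqB
        · rw [degree_X_sub_C, degree_eq_natDegree hqB.ne_zero, hqBd]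
          norm_cast; omega)
      (by rw [natDegree_divByMonic _ (monic_X_sub_C y), hqBd, natDegree_X_sub_C]; rfl)
      (by
        rw [map_divByMonic _ (monic_X_sub_C y), Polynomial.map_map,
          ← IsScalarTower.algebraMap_eq R B A, hmap, Fin.prod_univ_succ]
        have : Polynomial.map (algebraMap B A) (Polynomial.X - Polynomial.C y)
            = Polynomial.X - Polynomial.C (x 0) := by
          simp [y]
        rw [this, mul_divByMonic_cancel_left _ (monic_X_sub_C _)])
      (by
        have h1 := Algebra.adjoin_union_eq_adjoin_adjoin R {x 0} (Set.range fun i : Fin n => x i.succ)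
        have h2 : ({x 0} : Set A) ∪ (Set.range fun i : Fin n => x i.succ) = Set.range x := by
          ext a
          simp only [Set.mem_union, Set.mem_singleton_iff, Set.mem_range, Fin.exists_fin_succ]
          tauto
        rw [h2, ha] at h1
        rw [eq_top_iff]
        intro a _
        have : a ∈ (⊤ : Subalgebra R A) := trivial
        rw [h1] at this
        exact this)
    let s : Finset B := (Finset.range (n+1)).image (fun k => y ^ k)
    have hs : Submodule.span R (s : Set B) = ⊤ := by
      have h := Submodule.span_range_natDegree_eq_adjoin hq hroot
      rw [hdeg] at h
      apply Submodule.map_injective_of_injective (f := B.val.toLinearMap) Subtype.val_injective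
      rw [Submodule.map_span, Submodule.map_top]
      have h3 : (B.val.toLinearMap '' (s : Set B)) =
          (Finset.image (fun k => x 0 ^ k) (Finset.range (n+1)) : Finset A) := by
        simp [s, Set.image_image, y]
      rw [h3, h]
      ext a
      simp [B]
    refine ⟨Finset.image₂ (fun (b : B) (a : A) => b • a) s t, ?_, ?_⟩
    · refine (Finset.card_image₂_le _ _ _).trans ?_
      rw [Nat.factorial_succ]
      exact Nat.mul_le_mul (Finset.card_image_le.trans (by simp)) htc
    · rw [Finset.coe_image₂]
      have := Submodule.span_smul_of_span_eq_top hs (t : Set A)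
      rw [hts, Submodule.restrictScalars_top] at this
      exact this
end Span

theorem bp_inj_abstract {R A P : Type} [CommRing R] [CommRing A] [Algebra R A] [Fintype P]
    (Φ : A →ₗ[R] (P → R)) (D : P → A) (hD : LinearIndependent R (fun w => Φ (D w)))
    (s : Finset A) (hs : s.card ≤ Fintype.card P) (hspan : Submodule.span R (s : Set A) = ⊤) :
    Function.Injective Φ := by
  classical
  obtain ⟨e⟩ : Nonempty (s ↪ P) := by
    apply Function.Embedding.nonempty_of_card_le
    simpa using hs
  let b : P → A := Function.extend e Subtype.val 0
  let f : (P → R) →ₗ[R] A := Fintype.linearCombination R b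
  have hf : Function.Surjective f := by
    rw [← LinearMap.range_eq_top, Fintype.range_linearCombination, eq_top_iff, ← hspan]
    apply Submodule.span_mono
    intro a ha
    exact ⟨e ⟨a, ha⟩, e.injective.extend_apply _ _ _⟩
  let g : (P → R) →ₗ[R] LinearMap.range Φ := Φ.rangeRestrict ∘ₗ f
  have hg : Function.Surjective g := Φ.surjective_rangeRestrict.comp hf
  have : Module.Finite R (LinearMap.range Φ) := Module.Finite.of_surjective g hg
  let i : (P → R) →ₗ[R] LinearMap.range Φ := Φ.rangeRestrict ∘ₗ Fintype.linearCombination R D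
  have hi : Function.Injective i := by
    rw [← LinearMap.ker_eq_bot, LinearMap.ker_eq_bot']
    intro c hc
    have h1 : Φ (Fintype.linearCombination R D c) = 0 := congrArg Subtype.val hc
    rw [Fintype.linearCombination_apply, map_sum] at h1
    simp only [map_smul] at h1
    funext w
    exact Fintype.linearIndependent_iff.1 hD c h1 w
  have hgi := OrzechProperty.injective_of_surjective_of_injective i g hi hg
  rw [← LinearMap.ker_eq_bot, LinearMap.ker_eq_bot']
  intro a ha
  obtain ⟨c, rfl⟩ := hf a
  have : c = 0 := hgi (by rw [map_zero]; exact Subtype.ext ha)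
  rw [this, map_zero]

theorem bp_aeval {n : ℕ} {A : Type} [CommRing A] (f : MvPolynomial (Fin n) ℤ →+* A)
    (x : Fin n → A) (hx : ∀ i, f (X i) = x i) (P : MvPolynomial (Fin n) ℤ) :
    aeval (R := ℤ) x P = f P := by
  have : (aeval (R := ℤ) x).toRingHom = f := by
    apply MvPolynomial.ringHom_ext
    · intro r; simp
    · intro i; simp [hx]
  exact congrArg (fun f => f P) this

theorem bp_prod_eq (n : ℕ) {A : Type} [CommRing A] (x u : Fin n → A)
    (h : ∀ k ∈ Finset.Icc 1 n, aeval (R := ℤ) x (esymm (Fin n) ℤ k) =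
      aeval (R := ℤ) u (esymm (Fin n) ℤ k)) :
    ∏ i, (Polynomial.X - Polynomial.C (x i)) = ∏ i, (Polynomial.X - Polynomial.C (u i)) := by
  have key : ∀ v : Fin n → A, ∏ i, (Polynomial.X - Polynomial.C (v i)) =
      ∑ j ∈ Finset.range (n + 1), (-1) ^ j *
        (Polynomial.C (aeval (R := ℤ) v (esymm (Fin n) ℤ j)) * Polynomial.X ^ (n - j)) := by
    intro v
    have := Multiset.prod_X_sub_X_eq_sum_esymm (Finset.univ.val.map v)
    simp only [Multiset.map_map, Multiset.card_map, Finset.card_val, Finset.card_univ,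
      Fintype.card_fin] at this
    simp only [aeval_esymm_eq_multiset_esymm]
    exact this
  rw [key, key]
  apply Finset.sum_congr rfl
  intro j hj
  rcases Nat.eq_zero_or_pos j with rfl | hj0
  · simp
  · rw [h j (Finset.mem_Icc.2 ⟨hj0, Nat.lt_succ_iff.1 (Finset.mem_range.1 hj)⟩)]

theorem bp_linInd (n : ℕ) : LinearIndependent (MvPolynomial (Fin n) ℤ)
    (fun w => borelHom n (bpD n w)) := by
  classical
  rw [Fintype.linearIndependent_iff]
  intro c hc
  by_contra hne
  push Not at hne
  obtain ⟨w, hw, hmin⟩ := Finset.exists_min_image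
    (Finset.univ.filter (fun w : Equiv.Perm (Fin n) => c w ≠ 0)) bpKey
    (by obtain ⟨w, hw⟩ := hne; exact ⟨w, by simpa using hw⟩)
  simp only [Finset.mem_filter, Finset.mem_univ, true_and] at hw hmin
  have h1 := congrFun hc w
  rw [Finset.sum_apply, Finset.sum_eq_single w] at h1
  · simp only [Pi.smul_apply, smul_eq_mul, ← bpEv_apply, Pi.zero_apply, mul_eq_zero] at h1
    exact h1.elim hw (bpEv_D_ne w)
  · intro v _ hv
    simp only [Pi.smul_apply, smul_eq_mul, ← bpEv_apply]
    by_cases hcv : c v = 0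
    · rw [hcv, zero_mul]
    · have := hmin v hcv
      rw [bpEv_D_zero (lt_of_le_of_ne this fun h => hv (bpKey_inj h).symm), mul_zero]
  · simp

theorem bp_ker (n : ℕ) : RingHom.ker (borelHom n) = symmRelations n := by
  apply le_antisymm _ (bp_ker_ge n)
  let I := symmRelations n
  let A := MvPolynomial (Fin n ⊕ Fin n) ℤ ⧸ I
  let π : MvPolynomial (Fin n ⊕ Fin n) ℤ →+* A := Ideal.Quotient.mk I
  let ρ : MvPolynomial (Fin n) ℤ →+* A :=
    π.comp (rename (R := ℤ) (Sum.inr : Fin n → Fin n ⊕ Fin n)).toRingHom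
  let _ : Algebra (MvPolynomial (Fin n) ℤ) A := ρ.toAlgebra
  let φ : A →+* (Equiv.Perm (Fin n) → MvPolynomial (Fin n) ℤ) :=
    Ideal.Quotient.lift I (borelHom n) (fun a ha => bp_ker_ge n ha)
  have hφ : ∀ P, φ (π P) = borelHom n P := fun P => Ideal.Quotient.lift_mk _ _ _
  let Φ : A →ₗ[MvPolynomial (Fin n) ℤ] (Equiv.Perm (Fin n) → MvPolynomial (Fin n) ℤ) :=
    { toFun := φ
      map_add' := map_add φ
      map_smul' := by
        intro r a
        rw [Algebra.smul_def, map_mul]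
        funext w
        have : φ (algebraMap _ A r) w = r := by
          change φ (π (rename Sum.inr r)) w = r
          rw [hφ, ← bpEv_apply, bpEv_rename_inr]
        rw [Pi.mul_apply, this]
        rfl }
  let x : Fin n → A := fun i => π (X (Sum.inl i))
  obtain ⟨s, hs, hspan⟩ := bp_span n (MvPolynomial (Fin n) ℤ) A x
    (∏ i, (Polynomial.X - Polynomial.C (X i)))
    (Polynomial.monic_prod_of_monic _ _ fun i _ => Polynomial.monic_X_sub_C _)
    (by rw [Polynomial.natDegree_prod_of_monic _ _ fun i _ => Polynomial.monic_X_sub_C _]; simp)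
    (by
      rw [Polynomial.map_prod]
      simp only [Polynomial.map_sub, Polynomial.map_X, Polynomial.map_C]
      symm
      apply bp_prod_eq
      intro k hk
      have h1 := bp_aeval (π.comp (rename (R := ℤ) Sum.inl).toRingHom) x
        (fun i => by simp [x]) (esymm (Fin n) ℤ k)
      have h2 := bp_aeval ρ (fun i => algebraMap (MvPolynomial (Fin n) ℤ) A (X i))
        (fun i => rfl) (esymm (Fin n) ℤ k)
      refine h1.trans (Eq.trans ?_ h2.symm)
      exact Ideal.Quotient.eq.2 (Ideal.subset_span ⟨k, hk, rfl⟩))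
    (by
      rw [eq_top_iff]
      intro a _
      obtain ⟨P, rfl⟩ := Ideal.Quotient.mk_surjective a
      induction P using MvPolynomial.induction_on with
      | C r =>
        have : (Ideal.Quotient.mk I) (C r) = algebraMap (MvPolynomial (Fin n) ℤ) A (C r) := by
          simp [RingHom.algebraMap_toAlgebra, ρ, π]
        rw [this]
        exact Subalgebra.algebraMap_mem _ _
      | add p q hp hq => rw [map_add]; exact add_mem (hp trivial) (hq trivial)
      | mul_X p i hp =>
        rw [map_mul]
        refine mul_mem (hp trivial) ?_
        rcases i with i | i
        · exact Algebra.subset_adjoin ⟨i, rfl⟩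
        · have : (Ideal.Quotient.mk I) (X (Sum.inr i)) =
              algebraMap (MvPolynomial (Fin n) ℤ) A (X i) := by
            simp [RingHom.algebraMap_toAlgebra, ρ, π]
          rw [this]
          exact Subalgebra.algebraMap_mem _ _)
  have hinj := bp_inj_abstract Φ (fun w => π (bpD n w)) (bp_linInd n) s
    (by rw [Fintype.card_perm, Fintype.card_fin]; exact hs) hspan
  intro P hP
  rw [RingHom.mem_ker] at hP
  apply Ideal.Quotient.eq_zero_iff_mem.1
  apply hinj
  rw [map_zero]
  exact (hφ P).trans hP


/-- Borel-type presentation of the `Sp(1)ⁿ`-equivariant cohomology of `Fl_n(ℍ)`: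
the homomorphism `borelHom` sends `x_ν` to `(u_{w(ν)})_w` and `u_ν` to the constant
tuple `u_ν`, its kernel is the ideal of symmetric relations, and its range is the GKM
subring `𝒢`; hence it induces a ring isomorphism
`ℤ[x,u]/⟨(1+x₁)⋯(1+xₙ) = (1+u₁)⋯(1+uₙ)⟩ ≃ 𝒢`. -/
theorem borel_presentation_of_gkm (n : ℕ) (hn : 1 ≤ n) :
    (∀ ν : Fin n, borelHom n (X (Sum.inl ν)) = fun w : Equiv.Perm (Fin n) => X (w ν)) ∧
    (∀ ν : Fin n, borelHom n (X (Sum.inr ν)) = fun _ : Equiv.Perm (Fin n) => X ν) ∧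
    RingHom.ker (borelHom n) = symmRelations n ∧
    Set.range (borelHom n) = gkmSet n := by
  exact ⟨fun ν => funext fun w => bp_eval_inl n ν w, fun ν => funext fun w => bp_eval_inr n ν w,
    bp_ker n, bp_range n⟩
end

section
/- Let L₁,…,Lₙ be pairwise orthogonal nonzero ℍ-lines in ℍⁿ (1-dimensional left ℍ-submodules with (h,k) = 0 whenever h ∈ L_μ, k ∈ L_ν, μ ≠ ν). Suppose each L_ν is invariant under the action h ↦ h·A* of every diagonal matrix A = Diag(z₁,…,zₙ) whose entries z_ν are unit quaternions lying in the subfield ℂ = {a+bi} ⊂ ℍ. Then there exists a permutation w ∈ S_n such that L_ν = ℍe_{w(ν)} for all ν. -/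
open scoped Quaternion

/-- The quaternionic Hermitian form `(h,k) = Σ_ν h_ν ⬝ star k_ν` on `ℍⁿ`. -/
noncomputable def qForm (n : ℕ) (h k : Fin n → Quaternion ℝ) : Quaternion ℝ :=
  ∑ i : Fin n, h i * star (k i)

/-- A tuple of pairwise orthogonal nonzero `ℍ`-lines in `ℍⁿ`, each invariant under every
diagonal matrix with unit complex entries (acting by `h ↦ h ⬝ A*`), consists of
coordinate lines permuted by some `w ∈ S_n`. -/
theorem torus_fixed_flags (n : ℕ) (L : Fin n → Submodule (Quaternion ℝ) (Fin n → Quaternion ℝ))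
    (hline : ∀ ν, ∃ v : Fin n → Quaternion ℝ, v ≠ 0 ∧
      L ν = Submodule.span (Quaternion ℝ) {v})
    (horth : ∀ μ ν, μ ≠ ν → ∀ h ∈ L μ, ∀ k ∈ L ν, qForm n h k = 0)
    (hinv : ∀ z : Fin n → Quaternion ℝ,
      (∀ ν, ∃ a b : ℝ, a ^ 2 + b ^ 2 = 1 ∧ z ν = ⟨a, b, 0, 0⟩) →
      ∀ ν, ∀ v ∈ L ν, (fun i => v i * star (z i)) ∈ L ν) :
    ∃ w : Equiv.Perm (Fin n), ∀ ν,
      L ν = Submodule.span (Quaternion ℝ) {Pi.single (w ν) (1 : Quaternion ℝ)} := by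
  have key : ∀ ν, ∃ i : Fin n,
      L ν = Submodule.span (Quaternion ℝ) {Pi.single i (1 : Quaternion ℝ)} := by
    intro ν
    obtain ⟨v, hv, hL⟩ := hline ν
    obtain ⟨i, hi⟩ := Function.ne_iff.mp hv
    have hi' : v i ≠ 0 := hi
    refine ⟨i, ?_⟩
    have hz : ∀ j, j ≠ i → v j = 0 := by
      intro j hj
      by_contra hvj
      have h1 := hinv (fun k => if k = i then -1 else 1) (by
        intro k
        by_cases hk : k = i
        · refine ⟨-1, 0, by norm_num, ?_⟩
          simp only [hk, if_true]
          ext <;> simp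
        · refine ⟨1, 0, by norm_num, ?_⟩
          simp only [hk, if_false]
          ext <;> simp) ν v (by rw [hL]; exact Submodule.mem_span_singleton_self v)
      rw [hL, Submodule.mem_span_singleton] at h1
      obtain ⟨q, hq⟩ := h1
      have hqj := congrFun hq j
      have hqi := congrFun hq i
      simp only [Pi.smul_apply, smul_eq_mul, hj, if_false, if_true, star_one, mul_one,
        star_neg, mul_neg] at hqj hqi
      have hq1 : q = 1 := by
        apply mul_right_cancel₀ hvj
        rw [hqj, one_mul]
      rw [hq1, one_mul] at hqi
      apply hi'
      have h2 : (2 : ℝ) • v i = 0 := by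
        rw [two_smul]
        exact add_eq_zero_iff_eq_neg.mpr hqi
      exact (smul_eq_zero.mp h2).resolve_left (by norm_num)
    have hve : v = v i • (Pi.single i (1 : Quaternion ℝ) : Fin n → Quaternion ℝ) := by
      funext j
      by_cases hj : j = i
      · subst hj; simp
      · simp [hj, hz j hj]
    rw [hL]
    apply le_antisymm
    · rw [Submodule.span_singleton_le_iff_mem, Submodule.mem_span_singleton]
      exact ⟨v i, hve.symm⟩
    · rw [Submodule.span_singleton_le_iff_mem, Submodule.mem_span_singleton]
      refine ⟨(v i)⁻¹, ?_⟩
      conv_lhs => rw [hve]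
      rw [smul_smul]
      simp [inv_mul_cancel₀ hi']
  choose f hf using key
  have hinj : Function.Injective f := by
    intro μ ν h
    by_contra hne
    have h0 := horth μ ν hne (Pi.single (f μ) 1)
      (by rw [hf μ]; exact Submodule.mem_span_singleton_self _) (Pi.single (f μ) 1)
      (by rw [hf ν, h]; exact Submodule.mem_span_singleton_self _)
    unfold qForm at h0
    rw [Finset.sum_eq_single (f μ)] at h0
    · simp at h0
    · intro b _ hb
      simp [hb]
    · simp
  exact ⟨Equiv.ofBijective f (Finite.injective_iff_bijective.mp hinj), fun ν => hf ν⟩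
end
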